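/- Let B₁,…,B_m (m ≥ 2) be MUBs of ℂ^{s²} from the Latin square construction, and consider the ensemble where each |b^t_k⟩⟨b^t_k| occurs with probability 1/(s²m). Then the accessible information of this ensemble is exactly (1/2) log(s²) = log s. -/

import Mathlib

/-!
Write `d = s²`. For a POVM `(Mᵢ)` the mutual information of the uniform ensemble of `m` orthonormal
bases equals `log d + ∑ᵢ (η(tr Mᵢ) / d - (1 / (d m)) ∑ₜ ∑ₖ η(⟨bᵗₖ, Mᵢ bᵗₖ⟩))` with
`η x = -x log x` (`mutualInfo_bases`).

*Lower bound.* In the computational basis every `bᵗₖ` is uniform on `s` outcomes, and the formula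
gives `log d - log s = log s`. Orthonormality of the Latin square vectors (`ip_lsVec`) is the
vanishing of a geometric sum of `s`-th roots of unity, since `r` numbers the cells of each symbol
bijectively.

*Upper bound.* The Maassen–Uffink inequality for a positive semidefinite `M` and two mutually
unbiased bases (`mub_entropy`) says that the two entropies add up to at least
`tr M log d + 2 η(tr M)`. Applying it to the bases `t` and `t + 1` (cyclically) and averaging over
`t` bounds each summand above by `-tr Mᵢ log d / (2 d)`, and `∑ᵢ tr Mᵢ = d`.

The Maassen–Uffink inequality is obtained from the three lines theorem (`entropy_of_interp`). With
`P k = ⟨bₖ, M bₖ⟩`, `Q l = ⟨b'ₗ, M b'ₗ⟩`, `τ = tr M` and `G l k = ⟨b'ₗ, M bₖ⟩⟨bₖ, b'ₗ⟩`, the entire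
function `F z = ∑ (Q l)^(z/2) (P k)^(z/2) G l k` satisfies `F 0 = τ`. On `Re z = 0` it is the trace
of `M` times a unitary, so `|F| ≤ τ`; on `Re z = 1` Cauchy–Schwarz and unbiasedness give
`|F| ≤ τ² / √d`. Hence `Re F x ≤ τ (τ / √d) ^ x` on `[0, 1]` with equality at `0`, and comparing
derivatives at `0` gives the inequality.
-/


open scoped BigOperators ComplexOrder

noncomputable section

/-- Inner product `⟪φ, ψ⟫ = ∑ i, conj (φ i) * ψ i` on `ι → ℂ`. -/
def ip {ι : Type*} [Fintype ι] (φ ψ : ι → ℂ) : ℂ :=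
  ∑ i, (starRingEnd ℂ) (φ i) * ψ i

/-- Classical mutual information `H(P_A) + H(P_B) - H(P_{AB})` of a joint
(sub)distribution `q` on `A × R`. -/
def mutualInfo {A R : Type*} [Fintype A] [Fintype R] (q : A → R → ℝ) : ℝ :=
  (∑ a, Real.negMulLog (∑ i, q a i)) + (∑ i, Real.negMulLog (∑ a, q a i))
    - ∑ a, ∑ i, Real.negMulLog (q a i)

/-- A finite family of matrices is a POVM if all elements are positive semidefinite
and they sum to the identity. -/
def IsPOVM {ι : Type*} [Fintype ι] [DecidableEq ι] {r : ℕ}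
    (M : Fin r → Matrix ι ι ℂ) : Prop :=
  (∀ i, (M i).PosSemidef) ∧ ∑ i, M i = 1

/-- The set of classical mutual informations obtainable by measuring the ensemble
`{prior a, |v a⟩⟨v a|}` with some POVM; its supremum is the accessible information. -/
def accInfoSet {ι A : Type*} [Fintype ι] [DecidableEq ι] [Fintype A]
    (prior : A → ℝ) (v : A → ι → ℂ) : Set ℝ :=
  {x | ∃ (r : ℕ) (M : Fin r → Matrix ι ι ℂ), IsPOVM M ∧
    x = mutualInfo (fun a i => prior a * (ip (v a) (Matrix.mulVec (M i) (v a))).re)}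

/-- The root of unity `ω = e^{2πi/s}`. -/
def omg (s : ℕ) : ℂ := Complex.exp (2 * Real.pi * Complex.I / s)

/-- The basis vector `v_{t,ℓ}` of the Latin square basis: the uniform superposition
over cells of `L` containing symbol `ℓ`, with Fourier phases `ω^{t·r(i,j)}`. -/
def lsVec {s : ℕ} (L : Fin s → Fin s → Fin s) (r : Fin s × Fin s → Fin s) :
    Fin s × Fin s → (Fin s × Fin s → ℂ) :=
  fun tl p =>
    if L p.1 p.2 = tl.2 then
      (omg s) ^ ((tl.1 : ℕ) * (r p : ℕ)) / (Real.sqrt s : ℂ)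
    else 0

/-! ### The Maassen–Uffink inequality by complex interpolation -/

/-- Entropy inequality from complex interpolation. The weights `Q`, `P` are the marginals of `G`;
`h3` bounds `F z = ∑ (Q l)^(z/2) (P k)^(z/2) G l k` on `Re z = 0` and `h4` bounds it on `Re z = 1`.
The conclusion compares the derivative of `F` at `0` with that of the three lines bound. -/
lemma entropy_of_interp {K L : Type*} [Fintype K] [Fintype L] (G : L → K → ℂ)
    (Q : L → ℝ) (P : K → ℝ) (κ τ : ℝ) (hQ : ∀ l, 0 ≤ Q l) (hP : ∀ k, 0 ≤ P k)
    (hQs : ∑ l, Q l = τ) (hPs : ∑ k, P k = τ) (hτ : 0 < τ) (hκ : 0 < κ)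
    (h1 : ∀ l, ∑ k, G l k = (Q l : ℂ)) (h2 : ∀ k, ∑ l, G l k = (P k : ℂ))
    (h3 : ∀ (α : L → ℂ) (β : K → ℂ), (∀ l, ‖α l‖ = 1) → (∀ k, ‖β k‖ = 1) →
      ‖∑ l, ∑ k, α l * β k * G l k‖ ≤ τ)
    (h4 : ∀ l k, ‖G l k‖ ≤ κ * (√(Q l) * √(P k))) :
    ∑ l, Q l * Real.log (Q l) + ∑ k, P k * Real.log (P k) ≤ 2 * τ * Real.log (κ * τ) := by
  set w : L → K → ℝ := fun l k => (Real.log (Q l) + Real.log (P k)) / 2 with hw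
  -- `exp (z * log _)` instead of a complex power: with `log 0 = 0` it stays entire and unimodular
  -- on `Re z = 0` even where a weight vanishes.
  set F : ℂ → ℂ := fun z => ∑ l, ∑ k, Complex.exp (z * (w l k : ℂ)) * G l k with hF
  have hdiff : Differentiable ℂ F := by
    simp only [hF]; fun_prop
  have hbdd : BddAbove ((norm ∘ F) '' Complex.HadamardThreeLines.verticalClosedStrip 0 1) := by
    refine ⟨∑ l, ∑ k, Real.exp |w l k| * ‖G l k‖, ?_⟩
    rintro _ ⟨z, hz, rfl⟩
    have hz' : 0 ≤ z.re ∧ z.re ≤ 1 := hz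
    refine (norm_sum_le _ _).trans (Finset.sum_le_sum fun l _ => ?_)
    refine (norm_sum_le _ _).trans (Finset.sum_le_sum fun k _ => ?_)
    rw [norm_mul, Complex.norm_exp, Complex.re_mul_ofReal]
    gcongr
    calc z.re * w l k ≤ z.re * |w l k| := mul_le_mul_of_nonneg_left (le_abs_self _) hz'.1
      _ ≤ 1 * |w l k| := mul_le_mul_of_nonneg_right hz'.2 (abs_nonneg _)
      _ = _ := one_mul _
  have hleft : ∀ z : ℂ, z.re = 0 → ‖F z‖ ≤ τ := by
    intro z hz
    have key := h3 (fun l => Complex.exp (z * ((Real.log (Q l) / 2 : ℝ) : ℂ)))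
      (fun k => Complex.exp (z * ((Real.log (P k) / 2 : ℝ) : ℂ)))
      (fun l => by rw [Complex.norm_exp, Complex.re_mul_ofReal, hz]; simp)
      (fun k => by rw [Complex.norm_exp, Complex.re_mul_ofReal, hz]; simp)
    refine le_of_eq_of_le ?_ key
    simp only [hF]
    congr 1
    refine Finset.sum_congr rfl fun l _ => Finset.sum_congr rfl fun k _ => ?_
    rw [← Complex.exp_add]
    congr 2
    simp only [hw]; push_cast; ring
  have hright : ∀ z : ℂ, z.re = 1 → ‖F z‖ ≤ κ * τ ^ 2 := by
    intro z hz
    have : κ * τ ^ 2 = ∑ l, ∑ k, κ * (Q l * P k) := by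
      simp only [← Finset.mul_sum, ← Finset.sum_mul, hQs, hPs]; ring
    rw [this]
    refine (norm_sum_le _ _).trans (Finset.sum_le_sum fun l _ => ?_)
    refine (norm_sum_le _ _).trans (Finset.sum_le_sum fun k _ => ?_)
    rw [norm_mul, Complex.norm_exp, Complex.re_mul_ofReal, hz, one_mul]
    -- Where a weight vanishes so does `G l k`, hence the value `log 0 = 0` is harmless.
    have h4l := h4 l k
    rcases (hQ l).eq_or_lt with h | h
    · rw [← h] at h4l ⊢
      have : ‖G l k‖ = 0 := le_antisymm (by simpa using h4l) (norm_nonneg _)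
      simp [this]
    rcases (hP k).eq_or_lt with h' | h'
    · rw [← h'] at h4l ⊢
      have : ‖G l k‖ = 0 := le_antisymm (by simpa using h4l) (norm_nonneg _)
      simp [this]
    have he : Real.exp (w l k) = √(Q l) * √(P k) := by
      simp only [hw]
      rw [add_div, Real.exp_add, ← Real.log_sqrt h.le, ← Real.log_sqrt h'.le,
        Real.exp_log (Real.sqrt_pos.2 h), Real.exp_log (Real.sqrt_pos.2 h')]
    rw [he]
    calc √(Q l) * √(P k) * ‖G l k‖ ≤ √(Q l) * √(P k) * (κ * (√(Q l) * √(P k))) := by gcongr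
      _ = κ * ((√(Q l) * √(Q l)) * (√(P k) * √(P k))) := by ring
      _ = _ := by rw [Real.mul_self_sqrt h.le, Real.mul_self_sqrt h'.le]
  set c := Real.log (κ * τ) with hc
  have hinterp : ∀ x : ℝ, 0 ≤ x → x ≤ 1 → ‖F x‖ ≤ τ * Real.exp (x * c) := by
    intro x hx0 hx1
    have := Complex.HadamardThreeLines.norm_le_interp_of_mem_verticalClosedStrip' (f := F)
      (z := (x : ℂ)) (a := τ) (b := κ * τ ^ 2) (l := 0) (u := 1) zero_lt_one
      (show (x : ℂ).re ∈ Set.Icc (0 : ℝ) 1 from ⟨by simpa using hx0, by simpa using hx1⟩)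
      hdiff.diffContOnCl hbdd
      (fun z hz => hleft z (by simpa using hz)) (fun z hz => hright z (by simpa using hz))
    refine this.trans (le_of_eq ?_)
    rw [Complex.ofReal_re, sub_zero, sub_zero, div_one, show κ * τ ^ 2 = τ * (κ * τ) by ring,
      Real.mul_rpow hτ.le (by positivity), ← mul_assoc, ← Real.rpow_add hτ,
      Real.rpow_def_of_pos (mul_pos hκ hτ)]
    simp [hc, mul_comm]
  have hF0 : ∑ l, ∑ k, (G l k).re = τ := by
    have := congrArg Complex.re (Finset.sum_congr rfl fun l (_ : l ∈ Finset.univ) => h1 l)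
    simpa [hQs] using this
  -- `h ≥ 0` on `[0, 1]` and `h 0 = 0`, so its derivative at `0` is nonnegative.
  set h : ℝ → ℝ := fun x => τ * Real.exp (x * c) - ∑ l, ∑ k, Real.exp (x * w l k) * (G l k).re
    with hh
  have hnn : ∀ x : ℝ, 0 ≤ x → x ≤ 1 → 0 ≤ h x := by
    intro x hx0 hx1
    have e : (F x).re = ∑ l, ∑ k, Real.exp (x * w l k) * (G l k).re := by
      simp only [hF, Complex.re_sum]
      refine Finset.sum_congr rfl fun l _ => Finset.sum_congr rfl fun k _ => ?_
      rw [← Complex.ofReal_mul, ← Complex.ofReal_exp, Complex.re_ofReal_mul]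
    have := (Complex.re_le_norm (F x)).trans (hinterp x hx0 hx1)
    simp only [hh]; rw [← e]; linarith
  have hh0 : h 0 = 0 := by simp [hh, hF0]
  have hder : HasDerivAt h (τ * c - ∑ l, ∑ k, w l k * (G l k).re) 0 := by
    have hexp : ∀ a : ℝ, HasDerivAt (fun x : ℝ => Real.exp (x * a)) a 0 := fun a => by
      simpa using ((hasDerivAt_id (0 : ℝ)).mul_const a).exp
    refine ((hexp c).const_mul τ).sub ?_
    refine HasDerivAt.fun_sum fun l _ => HasDerivAt.fun_sum fun k _ => ?_
    exact (hexp _).mul_const _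
  have hpos : 0 ≤ τ * c - ∑ l, ∑ k, w l k * (G l k).re := by
    have ht := (hasDerivWithinAt_iff_tendsto_slope' (s := Set.Ioi (0:ℝ)) (by simp)).1 hder.hasDerivWithinAt
    refine ge_of_tendsto ht ?_
    filter_upwards [Ioc_mem_nhdsGT (zero_lt_one' ℝ)] with x hx
    rw [slope_def_field, hh0, sub_zero, sub_zero]
    exact div_nonneg (hnn x hx.1.le hx.2) hx.1.le
  have hsum : ∑ l, ∑ k, w l k * (G l k).re
      = (∑ l, Q l * Real.log (Q l) + ∑ k, P k * Real.log (P k)) / 2 := by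
    have e1 : ∀ l, ∑ k, (G l k).re = Q l := fun l => by
      simpa using congrArg Complex.re (h1 l)
    have e2 : ∀ k, ∑ l, (G l k).re = P k := fun k => by
      simpa using congrArg Complex.re (h2 k)
    have : ∀ l k, w l k * (G l k).re
        = (G l k).re * (Real.log (Q l) / 2) + (G l k).re * (Real.log (P k) / 2) := by
      intro l k; simp only [hw]; ring
    simp only [this, Finset.sum_add_distrib]
    rw [Finset.sum_comm (f := fun l k => (G l k).re * (Real.log (P k) / 2))]
    simp only [← Finset.sum_mul, e1, e2, add_div, Finset.sum_div, mul_div_assoc]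
  rw [hsum] at hpos
  linarith

/-- `|tr (M X)| ≤ tr M` for `M = Nᴴ N` and `X` unitary: `tr (Nᴴ (N X))` is the Frobenius inner
product of two matrices of the same Frobenius norm. -/
lemma norm_trace_mul_unitary_le {ι : Type*} [Fintype ι] [DecidableEq ι] (N X : Matrix ι ι ℂ)
    (hX : X * X.conjTranspose = 1) :
    ‖(N.conjTranspose * N * X).trace‖ ≤ (N.conjTranspose * N).trace.re := by
  have hfro : ∀ Y : Matrix ι ι ℂ, (Y.conjTranspose * Y).trace.re = ∑ j, ∑ i, ‖Y i j‖ ^ 2 := by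
    intro Y
    simp [Matrix.trace, Matrix.mul_apply, Complex.sq_norm, Complex.normSq_apply]
  have hinv : ∑ j, ∑ i, ‖(N * X) i j‖ ^ 2 = ∑ j, ∑ i, ‖N i j‖ ^ 2 := by
    rw [← hfro, ← hfro, Matrix.trace_mul_comm, Matrix.conjTranspose_mul,
      Matrix.trace_mul_comm N.conjTranspose N, ← Matrix.mul_assoc, Matrix.mul_assoc N, hX, Matrix.mul_one]
  rw [hfro, Matrix.mul_assoc]
  have : ‖(N.conjTranspose * (N * X)).trace‖ ≤ ∑ j, ∑ i, (‖N i j‖ ^ 2 + ‖(N * X) i j‖ ^ 2) / 2 := by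
    have e : (N.conjTranspose * (N * X)).trace = ∑ j, ∑ i, star (N i j) * (N * X) i j := rfl
    rw [e]
    refine (norm_sum_le _ _).trans (Finset.sum_le_sum fun j _ => ?_)
    refine (norm_sum_le _ _).trans (Finset.sum_le_sum fun i _ => ?_)
    rw [norm_mul, norm_star]
    nlinarith [sq_nonneg (‖N i j‖ - ‖(N * X) i j‖)]
  refine this.trans (le_of_eq ?_)
  simp only [← Finset.sum_div, Finset.sum_add_distrib, hinv]
  ring

open Matrix MatrixOrder Matrix.Norms.L2Operator in
/-- Maassen–Uffink uncertainty relation for an unnormalised state `M` and two orthonormal bases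
with overlaps at most `κ`; for mutually unbiased bases `-2 log κ` is the log of the dimension. -/
lemma mub_entropy {ι : Type*} [Fintype ι] [DecidableEq ι] (M : Matrix ι ι ℂ)
    (hM : M.PosSemidef) (b b' : ι → ι → ℂ)
    (hb : ∀ k l, ip (b k) (b l) = if k = l then 1 else 0)
    (hb' : ∀ k l, ip (b' k) (b' l) = if k = l then 1 else 0)
    (κ : ℝ) (hκ : 0 < κ) (hmub : ∀ k l, ‖ip (b k) (b' l)‖ ≤ κ) :
    M.trace.re * (-2 * Real.log κ) + 2 * Real.negMulLog M.trace.re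
      ≤ ∑ k, Real.negMulLog (ip (b k) (M.mulVec (b k))).re
        + ∑ k, Real.negMulLog (ip (b' k) (M.mulVec (b' k))).re := by
  obtain ⟨N, rfl⟩ : ∃ N : Matrix ι ι ℂ, M = Nᴴ * N :=
    CStarAlgebra.nonneg_iff_eq_star_mul_self.1 (Matrix.nonneg_iff_posSemidef.2 hM)
  set B : Matrix ι ι ℂ := Matrix.of fun p k => b k p with hB
  set C : Matrix ι ι ℂ := Matrix.of fun p k => b' k p with hC
  have hip : ∀ k l, ip (b k) (b' l) = (Bᴴ * C) k l := fun k l => rfl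
  have hBB : Bᴴ * B = 1 := by
    ext k l; exact (hb k l).trans (by rw [Matrix.one_apply])
  have hCC : Cᴴ * C = 1 := by
    ext k l; exact (hb' k l).trans (by rw [Matrix.one_apply])
  have hBB' : B * Bᴴ = 1 := mul_eq_one_comm.1 hBB
  have hCC' : C * Cᴴ = 1 := mul_eq_one_comm.1 hCC
  have hQ : ∀ k, ip (b k) ((Nᴴ * N).mulVec (b k)) = ((N * B)ᴴ * (N * B)) k k := by
    intro k
    rw [Matrix.conjTranspose_mul, Matrix.mul_assoc, ← Matrix.mul_assoc Nᴴ N B]; rfl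
  have hQ' : ∀ k, ip (b' k) ((Nᴴ * N).mulVec (b' k)) = ((N * C)ᴴ * (N * C)) k k := by
    intro k
    rw [Matrix.conjTranspose_mul, Matrix.mul_assoc, ← Matrix.mul_assoc Nᴴ N C]; rfl
  have hdiag : ∀ (Y : Matrix ι ι ℂ) (k : ι), (Yᴴ * Y) k k = ((∑ j, ‖Y j k‖ ^ 2 : ℝ) : ℂ) := by
    intro Y k
    simp [Matrix.mul_apply, Complex.conj_mul']
  set P : ι → ℝ := fun k => ∑ j, ‖(N * B) j k‖ ^ 2 with hPdef
  set Q : ι → ℝ := fun k => ∑ j, ‖(N * C) j k‖ ^ 2 with hQdef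
  have hP0 : ∀ k, 0 ≤ P k := fun k => by positivity
  have hQ0 : ∀ k, 0 ≤ Q k := fun k => by positivity
  simp only [hQ, hQ', hdiag, Complex.ofReal_re]
  set τ := (Nᴴ * N).trace.re with hτ
  have htr : ∀ Y : Matrix ι ι ℂ, Y * Yᴴ = 1 → ∑ k, ∑ j, ‖(N * Y) j k‖ ^ 2 = τ := by
    intro Y hY
    have : ((N * Y)ᴴ * (N * Y)).trace.re = ∑ k, ∑ j, ‖(N * Y) j k‖ ^ 2 := by
      rw [Matrix.trace, Complex.re_sum]
      exact Finset.sum_congr rfl fun k _ => by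
        rw [Matrix.diag_apply, hdiag, Complex.ofReal_re]
    rw [← this, Matrix.trace_mul_comm, Matrix.conjTranspose_mul, Matrix.mul_assoc,
      ← Matrix.mul_assoc Y, hY, Matrix.one_mul, Matrix.trace_mul_comm]
  have hPs : ∑ k, P k = τ := htr B hBB'
  have hQs : ∑ k, Q k = τ := htr C hCC'
  have hτ0 : 0 ≤ τ := hPs ▸ Finset.sum_nonneg fun k _ => hP0 k
  -- A zero trace forces all weights to vanish; interpolation needs `τ > 0`.
  rcases hτ0.eq_or_lt with h0 | hpos
  · have hPz : ∀ k, P k = 0 := fun k =>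
      (Finset.sum_eq_zero_iff_of_nonneg fun k _ => hP0 k).1 (hPs.trans h0.symm) k (Finset.mem_univ k)
    have hQz : ∀ k, Q k = 0 := fun k =>
      (Finset.sum_eq_zero_iff_of_nonneg fun k _ => hQ0 k).1 (hQs.trans h0.symm) k (Finset.mem_univ k)
    simp only [hPdef] at hPz
    simp only [hQdef] at hQz
    simp [hPz, hQz, ← h0]
  have key := entropy_of_interp
    (G := fun l k => ((N * C)ᴴ * (N * B)) l k * (Bᴴ * C) k l) Q P κ τ hQ0 hP0 hQs hPs hpos hκ
    (fun l => by
      rw [← Matrix.mul_apply, ← hdiag, Matrix.mul_assoc, Matrix.mul_assoc N, ← Matrix.mul_assoc B,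
        hBB', Matrix.one_mul])
    (fun k => by
      simp only [mul_comm _ ((Bᴴ * C) k _)]
      rw [← Matrix.mul_apply, ← hdiag, Matrix.conjTranspose_mul N C, Matrix.mul_assoc,
        ← Matrix.mul_assoc C, ← Matrix.mul_assoc C, hCC', Matrix.one_mul,
        Matrix.conjTranspose_mul N B, Matrix.mul_assoc])
    (fun α β hα hβ => by
      have hd : ∀ γ : ι → ℂ, (∀ k, ‖γ k‖ = 1) →
          Matrix.diagonal γ * (Matrix.diagonal γ)ᴴ = 1 := by
        intro γ hγ
        rw [Matrix.diagonal_conjTranspose, Matrix.diagonal_mul_diagonal, ← Matrix.diagonal_one]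
        congr 1; ext k
        simp [Complex.mul_conj', hγ]
      -- The phase-twisted sum is `tr (Nᴴ N X)` with `X = B diag(β) Bᴴ C diag(α) Cᴴ` unitary.
      have hX := norm_trace_mul_unitary_le N
        (B * (Matrix.diagonal β * (Bᴴ * (C * (Matrix.diagonal α * Cᴴ))))) (by
          simp only [Matrix.conjTranspose_mul, Matrix.conjTranspose_conjTranspose,
            Matrix.mul_assoc]
          rw [← Matrix.mul_assoc Cᴴ C, hCC, Matrix.one_mul,
            ← Matrix.mul_assoc (Matrix.diagonal α) (Matrix.diagonal α)ᴴ, hd α hα, Matrix.one_mul,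
            ← Matrix.mul_assoc C Cᴴ, hCC', Matrix.one_mul,
            ← Matrix.mul_assoc Bᴴ B, hBB, Matrix.one_mul,
            ← Matrix.mul_assoc (Matrix.diagonal β) (Matrix.diagonal β)ᴴ, hd β hβ, Matrix.one_mul,
            hBB'])
      refine le_of_eq_of_le (congrArg _ ?_) hX
      have e : (Nᴴ * N * (B * (Matrix.diagonal β * (Bᴴ * (C * (Matrix.diagonal α * Cᴴ)))))).trace
          = (((N * C)ᴴ * (N * B)) * (Matrix.diagonal β * (Bᴴ * C) * Matrix.diagonal α)).trace := by
        simp only [Matrix.conjTranspose_mul, Matrix.mul_assoc]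
        rw [Matrix.trace_mul_comm Cᴴ]
        simp only [Matrix.mul_assoc]
      rw [e, Matrix.trace]
      refine Finset.sum_congr rfl fun l _ => ?_
      rw [Matrix.diag_apply, Matrix.mul_apply]
      refine Finset.sum_congr rfl fun k _ => ?_
      rw [Matrix.mul_diagonal, Matrix.diagonal_mul]
      ring)
    (fun l k => by
      rw [norm_mul, mul_comm, ← hip]
      refine mul_le_mul (hmub k l) ?_ (norm_nonneg _) hκ.le
      rw [Matrix.mul_apply]
      refine (norm_sum_le _ _).trans ?_
      simp only [norm_mul, Matrix.conjTranspose_apply, norm_star]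
      exact Real.sum_mul_le_sqrt_mul_sqrt _ _ _)
  rw [Real.log_mul hκ.ne' hpos.ne'] at key
  simp only [Real.negMulLog, neg_mul, Finset.sum_neg_distrib]
  simp only [hPdef, hQdef] at key
  linarith

/-! ### Orthonormality of the Latin square bases -/

/-- The cells of `L` carrying the symbol `ℓ`, one per row, are numbered bijectively by `r`. -/
lemma sum_cell {A : Type*} [AddCommMonoid A] {s : ℕ} (L : Fin s → Fin s → Fin s)
    (hrow : ∀ i, Function.Bijective (L i)) (r : Fin s × Fin s → Fin s) (ℓ : Fin s)
    (hr : Set.InjOn r {p | L p.1 p.2 = ℓ}) (h : Fin s → A) :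
    ∑ p : Fin s × Fin s, (if L p.1 p.2 = ℓ then h (r p) else 0) = ∑ x, h x := by
  choose g hg using fun i => (hrow i).2 ℓ
  have hinj : Function.Injective (fun i => r (i, g i)) := by
    intro i i' hii
    exact congrArg Prod.fst (hr (hg i) (hg i') hii)
  rw [Fintype.sum_prod_type, ← (Finite.injective_iff_bijective.1 hinj).sum_comp h]
  refine Finset.sum_congr rfl fun i _ => ?_
  rw [Finset.sum_eq_single (g i)]
  · rw [if_pos (hg i)]
  · intro j _ hj
    exact if_neg fun hL => hj ((hrow i).1 (hL.trans (hg i).symm))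
  · simp

lemma norm_omg (s : ℕ) : ‖omg s‖ = 1 := by
  rw [omg, show 2 * (Real.pi : ℂ) * Complex.I / s = ((2 * Real.pi / s : ℝ) : ℂ) * Complex.I by
    push_cast; ring]
  exact Complex.norm_exp_ofReal_mul_I _

/-- The vectors of a Latin square basis are orthonormal: different symbols have disjoint supports,
and for one symbol the inner product is a normalised geometric sum of roots of unity. -/
lemma ip_lsVec {s : ℕ} [NeZero s] (L : Fin s → Fin s → Fin s)
    (hrow : ∀ i, Function.Bijective (L i)) (r : Fin s × Fin s → Fin s)
    (hr : ∀ ℓ : Fin s, Set.InjOn r {p | L p.1 p.2 = ℓ}) (a c : Fin s × Fin s) :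
    ip (lsVec L r a) (lsVec L r c) = if a = c then 1 else 0 := by
  obtain ⟨k, ℓ⟩ := a
  obtain ⟨k', ℓ'⟩ := c
  have hs : (s : ℂ) ≠ 0 := Nat.cast_ne_zero.2 (NeZero.ne s)
  have hsq : ((√(s : ℝ) : ℝ) : ℂ) * ((√(s : ℝ) : ℝ) : ℂ) = s := by
    rw [← Complex.ofReal_mul, Real.mul_self_sqrt (Nat.cast_nonneg s)]; simp
  have hω : IsPrimitiveRoot (omg s) s := Complex.isPrimitiveRoot_exp s (NeZero.ne s)
  have hω0 : omg s ≠ 0 := hω.ne_zero (NeZero.ne s)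
  have hconj : (starRingEnd ℂ) (omg s) = (omg s)⁻¹ := by
    rw [Complex.inv_def, Complex.normSq_eq_norm_sq, norm_omg]; simp
  by_cases hℓ : ℓ = ℓ'
  swap
  · rw [if_neg (by simp [hℓ])]
    refine Finset.sum_eq_zero fun p _ => ?_
    simp only [lsVec]
    by_cases h : L p.1 p.2 = ℓ
    · rw [if_neg (fun h' => hℓ (h.symm.trans h')), mul_zero]
    · rw [if_neg h, map_zero, zero_mul]
  subst hℓ
  set ζ : ℂ := (omg s)⁻¹ ^ (k : ℕ) * omg s ^ (k' : ℕ) with hζ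
  have hstep : ip (lsVec L r (k, ℓ)) (lsVec L r (k', ℓ)) = ∑ x : Fin s, ζ ^ (x : ℕ) / s := by
    rw [← sum_cell L hrow r ℓ (hr ℓ) (fun x => ζ ^ (x : ℕ) / s)]
    refine Finset.sum_congr rfl fun p _ => ?_
    simp only [lsVec]
    split_ifs with h
    · rw [map_div₀, map_pow, Complex.conj_ofReal, hconj, div_mul_div_comm, hsq, hζ, mul_pow,
        pow_mul, pow_mul]
    · simp
  rw [hstep, ← Finset.sum_div, Fin.sum_univ_eq_sum_range (fun x => ζ ^ x)]
  by_cases hk : k = k'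
  · subst hk
    have : ζ = 1 := by rw [hζ, ← mul_pow, inv_mul_cancel₀ hω0, one_pow]
    simp [this, hs]
  · rw [if_neg (by simp [hk])]
    have hne : ζ - 1 ≠ 0 := by
      intro h
      apply hk
      have h1 : ζ = 1 := sub_eq_zero.1 h
      rw [hζ, inv_pow, inv_mul_eq_one₀ (pow_ne_zero _ hω0)] at h1
      exact Fin.ext (hω.pow_inj k.2 k'.2 h1)
    have hone : ζ ^ s = 1 := by
      rw [hζ, mul_pow, pow_right_comm, pow_right_comm (omg s), inv_pow, hω.pow_eq_one]
      simp
    have := mul_geom_sum ζ s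
    rw [hone, sub_self] at this
    rw [(mul_eq_zero.1 this).resolve_left hne, zero_div]

/-! ### Mutual information of an ensemble of orthonormal bases -/

/-- The trace computed in an orthonormal basis. -/
lemma sum_ip_mulVec {ι : Type*} [Fintype ι] [DecidableEq ι] (M : Matrix ι ι ℂ) (b : ι → ι → ℂ)
    (hb : ∀ k l, ip (b k) (b l) = if k = l then 1 else 0) :
    ∑ k, ip (b k) (M.mulVec (b k)) = M.trace := by
  set B : Matrix ι ι ℂ := Matrix.of fun p k => b k p with hB
  have hBB : B.conjTranspose * B = 1 := by
    ext k l; exact (hb k l).trans (by rw [Matrix.one_apply])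
  have : ∑ k, ip (b k) (M.mulVec (b k)) = (B.conjTranspose * (M * B)).trace := rfl
  rw [this, Matrix.trace_mul_comm, Matrix.mul_assoc, mul_eq_one_comm.1 hBB, Matrix.mul_one]

lemma ip_sum_mulVec {ι : Type*} [Fintype ι] [DecidableEq ι] {n : ℕ} (M : Fin n → Matrix ι ι ℂ)
    (v : ι → ℂ) : ∑ i, ip v ((M i).mulVec v) = ip v ((∑ i, M i).mulVec v) := by
  simp only [ip, Matrix.sum_mulVec, Finset.sum_apply, Finset.mul_sum]
  exact Finset.sum_comm

/-- Mutual information of the uniform ensemble of `m` orthonormal bases of a `d`-dimensional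
space, in terms of the unnormalised entropies of the POVM elements. -/
lemma mutualInfo_bases {ι T : Type*} [Fintype ι] [DecidableEq ι] [Fintype T] [Nonempty ι]
    [Nonempty T] (b : T → ι → ι → ℂ)
    (hb : ∀ t k l, ip (b t k) (b t l) = if k = l then 1 else 0) {n : ℕ}
    (M : Fin n → Matrix ι ι ℂ) (hM : ∑ i, M i = 1) (d m : ℝ) (hd : d = Fintype.card ι)
    (hm : m = Fintype.card T) :
    mutualInfo (fun (a : T × ι) i => 1 / (d * m) * (ip (b a.1 a.2) ((M i).mulVec (b a.1 a.2))).re)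
      = Real.log d + ∑ i, (Real.negMulLog (M i).trace.re / d
        - (∑ t, ∑ k, Real.negMulLog (ip (b t k) ((M i).mulVec (b t k))).re) / (d * m)) := by
  have hd0 : 0 < d := by rw [hd]; exact_mod_cast Fintype.card_pos
  have hm0 : 0 < m := by rw [hm]; exact_mod_cast Fintype.card_pos
  set x : T × ι → Fin n → ℝ := fun a i => (ip (b a.1 a.2) ((M i).mulVec (b a.1 a.2))).re with hx
  have hx1 : ∀ a, ∑ i, x a i = 1 := by
    intro a
    have := congrArg Complex.re (ip_sum_mulVec M (b a.1 a.2))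
    rw [hM, Matrix.one_mulVec, hb, if_pos rfl, Complex.re_sum, Complex.one_re] at this
    exact this
  have hx2 : ∀ i, ∑ a, x a i = m * (M i).trace.re := by
    intro i
    rw [Fintype.sum_prod_type]
    have : ∀ t, ∑ k, x (t, k) i = (M i).trace.re := fun t => by
      rw [← sum_ip_mulVec (M i) (b t) (hb t), Complex.re_sum]
    simp [this, hm]
  have htr : ∑ i, (M i).trace.re = d := by
    rw [← Complex.re_sum, ← Matrix.trace_sum, hM, Matrix.trace_one, hd]; simp
  have hcard : ((Fintype.card (T × ι) : ℕ) : ℝ) = d * m := by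
    rw [Fintype.card_prod, hd, hm]; push_cast; ring
  have hnml : ∀ y : ℝ, y ≠ 0 → y * Real.negMulLog (1 / y) = Real.log y := by
    intro y hy
    rw [Real.negMulLog, one_div, Real.log_inv]; field_simp
  have e1 : ∑ a, Real.negMulLog (∑ i, 1 / (d * m) * x a i) = Real.log (d * m) := by
    simp only [← Finset.mul_sum, hx1, mul_one, Finset.sum_const, nsmul_eq_mul, Finset.card_univ,
      hcard]
    exact hnml _ (by positivity)
  have e2 : ∑ i, Real.negMulLog (∑ a, 1 / (d * m) * x a i)
      = Real.log d + ∑ i, Real.negMulLog (M i).trace.re / d := by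
    have : ∀ i, Real.negMulLog (∑ a, 1 / (d * m) * x a i)
        = (M i).trace.re * Real.negMulLog (1 / d) + Real.negMulLog (M i).trace.re / d := by
      intro i
      rw [← Finset.mul_sum, hx2, show 1 / (d * m) * (m * (M i).trace.re)
        = 1 / d * (M i).trace.re by field_simp, Real.negMulLog_mul]
      ring
    simp only [this, Finset.sum_add_distrib]
    rw [← Finset.sum_mul, htr, hnml d hd0.ne']
  have e3 : ∑ a, ∑ i, Real.negMulLog (1 / (d * m) * x a i)
      = Real.log (d * m) + ∑ i, (∑ t, ∑ k, Real.negMulLog (x (t, k) i)) / (d * m) := by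
    simp only [Real.negMulLog_mul, Finset.sum_add_distrib]
    congr 1
    · simp only [← Finset.sum_mul, hx1, one_mul, Finset.sum_const, nsmul_eq_mul, Finset.card_univ,
        hcard]
      exact hnml _ (by positivity)
    · rw [Finset.sum_comm]
      refine Finset.sum_congr rfl fun i _ => ?_
      rw [← Finset.mul_sum, Fintype.sum_prod_type]
      ring
  have : mutualInfo (fun (a : T × ι) i => 1 / (d * m) * x a i) = _ :=
    congrArg₂ (· - ·) (congrArg₂ (· + ·) e1 e2) e3
  rw [this, Finset.sum_sub_distrib]
  ring

/-! ### Accessible information -/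

/-- For any `m ≥ 2` mutually unbiased bases of `ℂ^{s²}` from the Latin square
construction, the accessible information of the uniform ensemble of all `s²·m` basis
vectors is exactly `(1/2) log s² = log s`. -/
theorem latin_square_accessible_info (s m : ℕ) [NeZero s] (hm : 2 ≤ m)
    (L : Fin m → Fin s → Fin s → Fin s)
    (hrow : ∀ t i, Function.Bijective (L t i))
    (hcol : ∀ t j, Function.Bijective (fun i => L t i j))
    (horthLS : ∀ t t', t ≠ t' → ∀ u v : Fin s, ∃! p : Fin s × Fin s,
      L t p.1 p.2 = u ∧ L t' p.1 p.2 = v)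
    (r : Fin m → Fin s × Fin s → Fin s)
    (hr : ∀ t, ∀ ℓ : Fin s, Set.InjOn (r t) {p | L t p.1 p.2 = ℓ})
    (hmub : ∀ t t', t ≠ t' → ∀ kl kl' : Fin s × Fin s,
      ‖ip (lsVec (L t) (r t) kl) (lsVec (L t') (r t') kl')‖ = 1 / Real.sqrt ((s : ℝ) ^ 2)) :
    sSup (accInfoSet
        (fun _ : Fin m × (Fin s × Fin s) => 1 / (((s : ℝ) ^ 2) * m))
        (fun a => lsVec (L a.1) (r a.1) a.2))
      = (1 / 2) * Real.log ((s : ℝ) ^ 2) := by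
  obtain ⟨n, rfl⟩ : ∃ n, m = n + 2 := ⟨m - 2, by omega⟩
  have hs0 : (0 : ℝ) < s := Nat.cast_pos.2 (NeZero.pos s)
  have hm0 : (0 : ℝ) < ((n + 2 : ℕ) : ℝ) := by positivity
  have hb := fun t => ip_lsVec (L t) (hrow t) (r t) (hr t)
  have hd : (s : ℝ) ^ 2 = Fintype.card (Fin s × Fin s) := by simp [sq]
  have hmT : ((n + 2 : ℕ) : ℝ) = Fintype.card (Fin (n + 2)) := by simp
  have hI := fun (q : ℕ) (M : Fin q → Matrix (Fin s × Fin s) (Fin s × Fin s) ℂ) hM =>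
    mutualInfo_bases (fun t => lsVec (L t) (r t)) hb M hM ((s : ℝ) ^ 2) ((n + 2 : ℕ) : ℝ) hd hmT
  refine IsGreatest.csSup_eq ⟨?_, ?_⟩
  -- The maximum is attained by measuring in the computational basis.
  · set e : Fin (s * s) ≃ Fin s × Fin s := finProdFinEquiv.symm with he
    have hsum : ∑ i, Matrix.diagonal (Pi.single (e i) (1 : ℂ)) = 1 := by
      rw [e.sum_comp (fun p => Matrix.diagonal (Pi.single p (1 : ℂ)))]
      ext p p'
      by_cases h : p = p'
      · subst h; simp [Matrix.sum_apply, Pi.single_apply]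
      · simp [Matrix.sum_apply, h]
    refine ⟨s * s, fun i => Matrix.diagonal (Pi.single (e i) 1), ⟨fun i => ?_, hsum⟩, ?_⟩
    · refine Matrix.PosSemidef.diagonal fun p => ?_
      by_cases h : p = e i
      · subst h; simp
      · simp [h]
    rw [hI _ _ hsum]
    have hprob : ∀ t k p, (ip (lsVec (L t) (r t) k)
        ((Matrix.diagonal (Pi.single p (1 : ℂ))).mulVec (lsVec (L t) (r t) k))).re
          = if L t p.1 p.2 = k.2 then 1 / (s : ℝ) else 0 := by
      intro t k p
      have h1 : ip (lsVec (L t) (r t) k)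
          ((Matrix.diagonal (Pi.single p (1 : ℂ))).mulVec (lsVec (L t) (r t) k))
          = ((‖lsVec (L t) (r t) k p‖ ^ 2 : ℝ) : ℂ) := by
        rw [ip, Finset.sum_eq_single p]
        · rw [Matrix.mulVec_diagonal, Pi.single_eq_same, one_mul, Complex.conj_mul']
          push_cast; rfl
        · intro p' _ hp
          rw [Matrix.mulVec_diagonal, Pi.single_eq_of_ne hp, zero_mul, mul_zero]
        · simp
      rw [h1, Complex.ofReal_re, lsVec]
      split_ifs with h
      · rw [norm_div, norm_pow, norm_omg, one_pow, Complex.norm_real,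
          Real.norm_of_nonneg (Real.sqrt_nonneg _), div_pow, Real.sq_sqrt hs0.le, one_pow]
      · simp
    have hent : ∀ (t : Fin (n + 2)) (p : Fin s × Fin s), ∑ k : Fin s × Fin s,
        Real.negMulLog (if L t p.1 p.2 = k.2 then 1 / (s : ℝ) else 0) = Real.log s := by
      intro t p
      simp only [apply_ite Real.negMulLog, Real.negMulLog_zero, Fintype.sum_prod_type,
        Finset.sum_ite_eq, Finset.mem_univ, if_true, Finset.sum_const, Finset.card_univ,
        Fintype.card_fin, nsmul_eq_mul]
      rw [Real.negMulLog, one_div, Real.log_inv]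
      field_simp
    simp only [hprob, hent, Matrix.trace_diagonal, Finset.sum_pi_single', Finset.mem_univ, if_true,
      Complex.one_re, Real.negMulLog_one, Finset.sum_const, Finset.card_univ, Fintype.card_fin,
      nsmul_eq_mul, Real.log_pow]
    push_cast
    field_simp
    ring
  · rintro _ ⟨q, M, ⟨hpsd, hsum⟩, rfl⟩
    rw [hI q M hsum]
    have hpair : ∀ i, ∀ t t', t ≠ t' → _ := fun i t t' h => mub_entropy (M i) (hpsd i)
      (lsVec (L t) (r t)) (lsVec (L t') (r t')) (hb t) (hb t') (1 / √((s : ℝ) ^ 2))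
      (by positivity) (fun k l => (hmub t t' h k l).le)
    have hlog : -2 * Real.log (1 / √((s : ℝ) ^ 2)) = Real.log ((s : ℝ) ^ 2) := by
      rw [one_div, Real.log_inv, Real.log_sqrt (by positivity)]; ring
    have htr : ∑ i, (M i).trace.re = (s : ℝ) ^ 2 := by
      rw [← Complex.re_sum, ← Matrix.trace_sum, hsum, Matrix.trace_one]; simp [sq]
    rw [hlog] at hpair
    have hbound : ∀ i, Real.negMulLog (M i).trace.re / (s : ℝ) ^ 2
        - (∑ t, ∑ k, Real.negMulLog
          (ip (lsVec (L t) (r t) k) ((M i).mulVec (lsVec (L t) (r t) k))).re)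
            / ((s : ℝ) ^ 2 * ((n + 2 : ℕ) : ℝ))
        ≤ (M i).trace.re * (-Real.log ((s : ℝ) ^ 2) / (2 * (s : ℝ) ^ 2)) := by
      intro i
      set H : Fin (n + 2) → ℝ := fun t => ∑ k, Real.negMulLog
          (ip (lsVec (L t) (r t) k) ((M i).mulVec (lsVec (L t) (r t) k))).re with hH
      -- Each basis occurs twice among the cyclic pairs `(t, t + 1)`, distinct as `m ≥ 2`.
      have h1 := Finset.sum_le_sum fun t (_ : t ∈ Finset.univ) =>
        hpair i t (t + 1) (by simp)
      have h2 : ∑ t, H (t + 1) = ∑ t, H t := Equiv.sum_comp (Equiv.addRight (1 : Fin (n + 2))) H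
      rw [Finset.sum_const, Finset.card_univ, Fintype.card_fin, nsmul_eq_mul,
        Finset.sum_add_distrib] at h1
      change _ ≤ ∑ t, H t + ∑ t, H (t + 1) at h1
      rw [h2] at h1
      have h3 : ((M i).trace.re * Real.log ((s : ℝ) ^ 2) + 2 * Real.negMulLog (M i).trace.re)
          / (2 * (s : ℝ) ^ 2) ≤ (∑ t, H t) / ((s : ℝ) ^ 2 * ((n + 2 : ℕ) : ℝ)) := by
        rw [div_le_div_iff₀ (by positivity) (by positivity)]
        have := mul_le_mul_of_nonneg_left h1 (show 0 ≤ (s : ℝ) ^ 2 by positivity)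
        linarith
      refine (sub_le_sub_left h3 _).trans (le_of_eq ?_)
      field_simp
      ring
    have := Finset.sum_le_sum fun i (_ : i ∈ Finset.univ) => hbound i
    rw [← Finset.sum_mul, htr] at this
    have e : (s : ℝ) ^ 2 * (-Real.log ((s : ℝ) ^ 2) / (2 * (s : ℝ) ^ 2))
      = - (Real.log ((s : ℝ) ^ 2) / 2) := by field_simp
    rw [e] at this
    linarith
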